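/- Let W be a finite increasing filtration of V over an algebraically closed field of characteristic zero, N a nilpotent endomorphism of V preserving W for which the relative weight filtration M = W^r(N, W) exists, and let Y^r be a grading of M that preserves W and satisfies [Y^r, N] = -2N. Then there exists a unique grading Y of W such that (1) [Y^r, Y] = 0; (2) writing N = N₀ + N₋₁ + N₋₂ + ⋯ for the decomposition of N into eigencomponents of ad Y (N₋ⱼ in the (-j)-eigenspace), one has N₋₁ = 0; and (3) (ad N₀)^{k-1}(N₋ₖ) = 0 for all k > 0. -/

import Mathlib

section
variable {K V : Type*} [Field K] [AddCommGroup V] [Module K V]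

/-- Monodromy weight filtration predicate. -/
def IsWeightFiltration (N : Module.End K V) (Wf : ℤ → Submodule K V) : Prop :=
  Monotone Wf ∧
  (∃ a : ℤ, ∀ k ≤ a, Wf k = ⊥) ∧
  (∃ b : ℤ, ∀ k, b ≤ k → Wf k = ⊤) ∧
  (∀ ℓ : ℤ, ∀ v ∈ Wf ℓ, N v ∈ Wf (ℓ - 2)) ∧
  (∀ ℓ : ℤ, 0 ≤ ℓ →
    ((∀ w ∈ Wf (-ℓ), ∃ v ∈ Wf ℓ, (N ^ ℓ.toNat) v - w ∈ Wf (-ℓ - 1)) ∧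
     (∀ v ∈ Wf ℓ, (N ^ ℓ.toNat) v ∈ Wf (-ℓ - 1) → v ∈ Wf (ℓ - 1))))

/-- The graded piece `Gr^W_k = W_k / W_{k-1}`. -/
abbrev GrPiece (W : ℤ → Submodule K V) (k : ℤ) :=
  W k ⧸ (Submodule.comap (W k).subtype (W (k - 1)))

/-- The endomorphism induced on `Gr^W_k` by an endomorphism preserving `W`. -/
noncomputable def grEnd (W : ℤ → Submodule K V) (N : Module.End K V) (k : ℤ)
    (h1 : ∀ x ∈ W k, N x ∈ W k) (h2 : ∀ x ∈ W (k - 1), N x ∈ W (k - 1)) :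
    Module.End K (GrPiece W k) :=
  Submodule.mapQ _ _ (N.restrict h1) (by
    intro x hx
    simp only [Submodule.mem_comap, LinearMap.restrict_apply] at *
    exact h2 _ hx)

/-- The filtration induced by `M` on `Gr^W_k`. -/
def inducedFil (W M : ℤ → Submodule K V) (k j : ℤ) : Submodule K (GrPiece W k) :=
  ((M j).comap (W k).subtype).map (Submodule.mkQ _)

/-- `M` is the relative weight filtration of `(N, W)`. -/
def IsRelWeightFiltration (W : ℤ → Submodule K V) (N : Module.End K V)
    (hNW : ∀ k, ∀ x ∈ W k, N x ∈ W k) (M : ℤ → Submodule K V) : Prop :=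
  Monotone M ∧
  (∃ a : ℤ, ∀ k ≤ a, M k = ⊥) ∧
  (∃ b : ℤ, ∀ k, b ≤ k → M k = ⊤) ∧
  (∀ k : ℤ, ∀ v ∈ M k, N v ∈ M (k - 2)) ∧
  (∀ k : ℤ, IsWeightFiltration (grEnd W N k (hNW k) (hNW (k - 1)))
      (fun j => inducedFil W M k (j + k)))

/-- `Y` is a grading of the filtration `A`: semisimple with integer eigenvalues and
`A_k = ⊕_{j ≤ k} E_j(Y)`. -/
def IsGrading (A : ℤ → Submodule K V) (Y : Module.End K V) : Prop :=
  ∀ k : ℤ, A k = ⨆ j : ℤ, ⨆ _ : j ≤ k, Module.End.eigenspace Y (j : K)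

/-- The adjoint action `ad A = [A, ·]` on `End(V)`. -/
noncomputable def adE (A : Module.End K V) : Module.End K (Module.End K V) :=
  LinearMap.mulLeft K A - LinearMap.mulRight K A

end

section Sl2

variable {K U : Type*} [Field K] [AddCommGroup U] [Module K U]

/-- Commuting a raising operator past a power of the lowering operator. -/
lemma sl2_raise_pow_lower {a b h : Module.End K U} (hba : b * a - a * b = h)
    (hha : h * a - a * h = (-2 : K) • a) {v : U} {μ : K} (hv : h v = μ • v) (k : ℕ) :
    h ((a ^ k) v) = (μ - 2 * k) • (a ^ k) v ∧
    b ((a ^ (k + 1)) v) = (a ^ (k + 1)) (b v) + ((k + 1) * (μ - k) : K) • (a ^ k) v := by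
  have hba' (x : U) : b (a x) = a (b x) + h x := by
    rw [← hba]; simp
  have hha' (x : U) : h (a x) = a (h x) - (2 : K) • a x := by
    have := congrArg (fun f : Module.End K U => f x) hha
    simp only [LinearMap.sub_apply, Module.End.mul_apply, LinearMap.smul_apply] at this
    rw [sub_eq_iff_eq_add.mp this]; module
  induction k with
  | zero => simp [hv, hba']
  | succ k ih =>
    obtain ⟨ih1, ih2⟩ := ih
    have e1 : h ((a ^ (k + 1)) v) = (μ - 2 * (k + 1 : ℕ)) • (a ^ (k + 1)) v := by
      rw [pow_succ', Module.End.mul_apply, hha', ih1, map_smul]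
      push_cast; module
    refine ⟨e1, ?_⟩
    rw [pow_succ' a (k + 1), Module.End.mul_apply, hba', e1, ih2, map_add, map_smul,
      Module.End.mul_apply, pow_succ' a k, Module.End.mul_apply]
    push_cast; module

/-- A power `a ^ k` of the lowering operator is injective on each weight space of weight at
least `k`. -/
lemma sl2_lower_pow_injective [CharZero K] {a b h : Module.End K U} (hba : b * a - a * b = h)
    (hha : h * a - a * h = (-2 : K) • a) (hhb : h * b - b * h = (2 : K) • b)
    (hb : IsNilpotent b) (k : ℕ) (μ : ℤ) (hk : k ≤ μ) (v : U)
    (hv : h v = (μ : K) • v) (hav : (a ^ k) v = 0) : v = 0 := by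
  obtain ⟨n, hn⟩ := hb
  have hbv : (b ^ n) v = 0 := by simp [hn]
  clear hn
  induction n generalizing k μ v with
  | zero => simpa using hbv
  | succ n ihn =>
    induction k with
    | zero => simpa using hav
    | succ k ihk =>
      have hav' : (a ^ (k + 2)) v = 0 := by
        rw [pow_succ', Module.End.mul_apply, hav, map_zero]
      have hbv0 : b v = 0 := by
        refine ihn (k + 2) (μ + 2) (by push_cast at hk ⊢; omega) (b v) ?_ ?_ ?_
        · have := congrArg (fun f : Module.End K U => f v) hhb
          simp only [LinearMap.sub_apply, Module.End.mul_apply, LinearMap.smul_apply] at this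
          rw [sub_eq_iff_eq_add.mp this, hv, map_smul]; push_cast; module
        · have := (sl2_raise_pow_lower hba hha hv (k + 1)).2
          rw [hav', hav] at this
          simpa using this.symm
        · rw [← Module.End.mul_apply, ← pow_succ]; exact hbv
      refine ihk (by push_cast at hk; omega) ?_
      have := (sl2_raise_pow_lower hba hha hv k).2
      rw [hav, hbv0, map_zero, map_zero, zero_add] at this
      rcases smul_eq_zero.mp this.symm with h0 | h0
      · exfalso
        have h0' : (((k : ℤ) + 1) * (μ - k) : ℤ) = 0 := by
          have : ((((k : ℤ) + 1) * (μ - k) : ℤ) : K) = 0 := by push_cast; exact h0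
          exact_mod_cast this
        rcases mul_eq_zero.mp h0' with h1 | h1 <;> push_cast at hk <;> omega
      · exact h0

end Sl2

section Ad

/-- The inner derivation `[a, ·]` of an associative algebra. -/
noncomputable def innerDer (K : Type*) {R : Type*} [Field K] [Ring R] [Algebra K R] (a : R) :
    Module.End K R :=
  LinearMap.mulLeft K a - LinearMap.mulRight K a

variable {K R S : Type*} [Field K] [Ring R] [Algebra K R] [Ring S] [Algebra K S]

lemma innerDer_apply (a x : R) : innerDer K a x = a * x - x * a := rfl

lemma innerDer_commutator (a b : R) :
    innerDer K a * innerDer K b - innerDer K b * innerDer K a = innerDer K (a * b - b * a) := by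
  ext x
  simp only [LinearMap.sub_apply, Module.End.mul_apply, innerDer_apply]
  noncomm_ring

lemma innerDer_smul (c : K) (a : R) : innerDer K (c • a) = c • innerDer K a := by
  ext x
  simp [innerDer_apply, smul_sub]

lemma map_innerDer_pow (f : R →ₐ[K] S) (a x : R) (n : ℕ) :
    f ((innerDer K a ^ n) x) = (innerDer K (f a) ^ n) (f x) := by
  induction n with
  | zero => simp
  | succ n ih =>
    simp only [pow_succ', Module.End.mul_apply, innerDer_apply, map_sub, map_mul, ih]

lemma isNilpotent_innerDer {a : R} (ha : IsNilpotent a) : IsNilpotent (innerDer K a) := by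
  refine Commute.isNilpotent_sub ?_ ?_ ?_
  · exact LinearMap.commute_mulLeft_right a a
  · rwa [LinearMap.isNilpotent_mulLeft_iff]
  · rwa [LinearMap.isNilpotent_mulRight_iff]

/-- Conjugation `x ↦ u * x * t` by a unit `u` with inverse `t`. -/
def conjHom (K : Type*) {R : Type*} [Field K] [Ring R] [Algebra K R] (u t : R)
    (htu : t * u = 1) (hut : u * t = 1) : R →ₐ[K] R :=
  AlgHom.ofLinearMap (LinearMap.mulLeft K u ∘ₗ LinearMap.mulRight K t)
    (by simp [hut])
    (by
      intro x z
      simp only [LinearMap.comp_apply, LinearMap.mulLeft_apply, LinearMap.mulRight_apply]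
      calc u * (x * z * t) = u * x * 1 * z * t := by noncomm_ring
        _ = u * (x * t) * (u * (z * t)) := by rw [← htu]; noncomm_ring)

lemma conjHom_apply (u t : R) (htu : t * u = 1) (hut : u * t = 1) (x : R) :
    conjHom K u t htu hut x = u * x * t := by
  simp [conjHom, AlgHom.ofLinearMap, mul_assoc]

end Ad

section Graded

variable {K ι : Type*} [Field K]

/-- Matrices all of whose nonzero entries `(i, j)` satisfy `g i - g j = c`. -/
def homog (K : Type*) {ι : Type*} [Field K] (g : ι → ℤ) (c : ℤ) :
    Submodule K (Matrix ι ι K) where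
  carrier := {X | ∀ i j, X i j ≠ 0 → g i - g j = c}
  add_mem' {X Z} hX hZ i j h := by
    by_cases h0 : X i j = 0
    · exact hZ i j (by simpa [h0] using h)
    · exact hX i j h0
  zero_mem' i j h := absurd rfl h
  smul_mem' a X hX i j h := hX i j (right_ne_zero_of_mul h)

/-- Matrices all of whose nonzero entries `(i, j)` satisfy `g i - g j ≤ c`. -/
def lower (K : Type*) {ι : Type*} [Field K] (g : ι → ℤ) (c : ℤ) :
    Submodule K (Matrix ι ι K) where
  carrier := {X | ∀ i j, X i j ≠ 0 → g i - g j ≤ c}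
  add_mem' {X Z} hX hZ i j h := by
    by_cases h0 : X i j = 0
    · exact hZ i j (by simpa [h0] using h)
    · exact hX i j h0
  zero_mem' i j h := absurd rfl h
  smul_mem' a X hX i j h := hX i j (right_ne_zero_of_mul h)

/-- The component of degree `c` of a matrix for the grading `g`. -/
def component (K : Type*) {ι : Type*} [Field K] (g : ι → ℤ) (c : ℤ) :
    Module.End K (Matrix ι ι K) where
  toFun X := Matrix.of fun i j => if g i - g j = c then X i j else 0
  map_add' X Z := by ext i j; simp only [Matrix.of_apply, Matrix.add_apply]; split_ifs <;> simp
  map_smul' a X := by ext i j; simp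

lemma component_apply (g : ι → ℤ) (c : ℤ) (X : Matrix ι ι K) (i j : ι) :
    component K g c X i j = if g i - g j = c then X i j else 0 := rfl

variable {g g' : ι → ℤ} {c d : ℤ} {X Z : Matrix ι ι K}

lemma homog_le_lower : homog K g c ≤ lower K g c := fun _ hX i j h => (hX i j h).le

lemma lower_mono (h : c ≤ d) : lower K g c ≤ lower K g d :=
  fun _ hX i j hij => (hX i j hij).trans h

lemma component_mem_homog (X : Matrix ι ι K) : component K g c X ∈ homog K g c := by
  intro i j h
  rw [component_apply] at h
  by_contra hne
  simp [hne] at h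

lemma component_mem_homog_of_mem (hX : X ∈ homog K g' d) :
    component K g c X ∈ homog K g' d := by
  intro i j h
  rw [component_apply] at h
  split_ifs at h with hij
  · exact hX i j h
  · simp at h

lemma component_mem_lower_of_mem (hX : X ∈ lower K g' d) :
    component K g c X ∈ lower K g' d := by
  intro i j h
  rw [component_apply] at h
  split_ifs at h with hij
  · exact hX i j h
  · simp at h

lemma component_of_mem_homog (hX : X ∈ homog K g d) :
    component K g c X = if c = d then X else 0 := by
  ext i j
  rw [component_apply]
  by_cases h0 : X i j = 0
  · split_ifs <;> simp [h0]
  · have := hX i j h0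
    split_ifs <;> first | rfl | omega

lemma component_eq_zero (hX : X ∈ lower K g d) (h : d < c) : component K g c X = 0 := by
  ext i j
  rw [component_apply]
  by_cases h0 : X i j = 0
  · simp [h0]
  · have := hX i j h0
    rw [if_neg (by omega)]; rfl

lemma mem_lower_pred (hX : X ∈ lower K g c) (h : component K g c X = 0) :
    X ∈ lower K g (c - 1) := by
  intro i j hij
  have h1 := hX i j hij
  have h2 := congrFun (congrFun h i) j
  rw [component_apply] at h2
  by_contra hne
  rw [if_pos (by omega)] at h2
  exact hij h2

/-- Matrices of sufficiently negative degree vanish. -/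
lemma exists_lower_eq_bot [Finite ι] (g : ι → ℤ) : ∃ n : ℕ, lower K g (-n) = ⊥ := by
  obtain ⟨n, hn⟩ := (Set.finite_range fun p : ι × ι => g p.2 - g p.1).bddAbove
  refine ⟨n.toNat + 1, (Submodule.eq_bot_iff _).mpr fun X hX => ?_⟩
  ext i j
  by_contra h0
  have h1 := hX i j h0
  have h2 : g j - g i ≤ n := hn ⟨(i, j), rfl⟩
  push_cast at h1
  omega

lemma diagonal_mem_homog [DecidableEq ι] (a : ι → K) : Matrix.diagonal a ∈ homog K g 0 := by
  intro i j h
  rw [Matrix.diagonal_apply] at h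
  split_ifs at h with hij
  · simp [hij]
  · simp at h

lemma one_mem_homog [DecidableEq ι] : (1 : Matrix ι ι K) ∈ homog K g 0 :=
  diagonal_mem_homog fun _ => 1

variable [Fintype ι]

lemma mul_mem_homog (hX : X ∈ homog K g c) (hZ : Z ∈ homog K g d) :
    X * Z ∈ homog K g (c + d) := by
  intro i j h
  rw [Matrix.mul_apply] at h
  obtain ⟨k, _, hk⟩ := Finset.exists_ne_zero_of_sum_ne_zero h
  have h1 := hX i k (left_ne_zero_of_mul hk)
  have h2 := hZ k j (right_ne_zero_of_mul hk)
  omega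

lemma mul_mem_lower (hX : X ∈ lower K g c) (hZ : Z ∈ lower K g d) :
    X * Z ∈ lower K g (c + d) := by
  intro i j h
  rw [Matrix.mul_apply] at h
  obtain ⟨k, _, hk⟩ := Finset.exists_ne_zero_of_sum_ne_zero h
  have h1 := hX i k (left_ne_zero_of_mul hk)
  have h2 := hZ k j (right_ne_zero_of_mul hk)
  omega

lemma component_mul_of_mem_lower (hX : X ∈ lower K g c) (hZ : Z ∈ lower K g d) :
    component K g (c + d) (X * Z) = component K g c X * component K g d Z := by
  ext i j
  rw [component_apply, Matrix.mul_apply, Matrix.mul_apply]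
  split_ifs with hij
  · refine Finset.sum_congr rfl fun k _ => ?_
    rw [component_apply, component_apply]
    by_cases h1 : X i k = 0
    · simp [h1]
    by_cases h2 : Z k j = 0
    · simp [h2]
    have h3 := hX i k h1
    have h4 := hZ k j h2
    rw [if_pos (by omega), if_pos (by omega)]
  · refine (Finset.sum_eq_zero fun k _ => ?_).symm
    rw [component_apply, component_apply]
    by_cases h1 : g i - g k = c
    · rw [if_neg (by omega : ¬ g k - g j = d), mul_zero]
    · rw [if_neg h1, zero_mul]

lemma component_mul_of_mem_homog_left (hX : X ∈ homog K g d) :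
    component K g c (X * Z) = X * component K g (c - d) Z := by
  ext i j
  rw [component_apply, Matrix.mul_apply, Matrix.mul_apply]
  by_cases hij : g i - g j = c
  · rw [if_pos hij]
    refine Finset.sum_congr rfl fun k _ => ?_
    rw [component_apply]
    by_cases h1 : X i k = 0
    · simp [h1]
    · have := hX i k h1
      rw [if_pos (by omega)]
  · rw [if_neg hij]
    refine (Finset.sum_eq_zero fun k _ => ?_).symm
    rw [component_apply]
    by_cases h1 : X i k = 0
    · simp [h1]
    · have := hX i k h1
      rw [if_neg (by omega), mul_zero]

lemma component_mul_of_mem_homog_right (hZ : Z ∈ homog K g d) :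
    component K g c (X * Z) = component K g (c - d) X * Z := by
  ext i j
  rw [component_apply, Matrix.mul_apply, Matrix.mul_apply]
  by_cases hij : g i - g j = c
  · rw [if_pos hij]
    refine Finset.sum_congr rfl fun k _ => ?_
    rw [component_apply]
    by_cases h1 : Z k j = 0
    · simp [h1]
    · have := hZ k j h1
      rw [if_pos (by omega)]
  · rw [if_neg hij]
    refine (Finset.sum_eq_zero fun k _ => ?_).symm
    rw [component_apply]
    by_cases h1 : Z k j = 0
    · simp [h1]
    · have := hZ k j h1
      rw [if_neg (by omega), zero_mul]

variable [DecidableEq ι]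

lemma pow_mem_homog (hX : X ∈ homog K g c) (n : ℕ) : X ^ n ∈ homog K g (n * c) := by
  induction n with
  | zero => simpa using one_mem_homog
  | succ n ih =>
    rw [Nat.cast_succ, add_one_mul, pow_succ]
    exact mul_mem_homog ih hX

lemma pow_mem_lower (hX : X ∈ lower K g c) (n : ℕ) : X ^ n ∈ lower K g (n * c) := by
  induction n with
  | zero => simpa using homog_le_lower one_mem_homog
  | succ n ih =>
    rw [Nat.cast_succ, add_one_mul, pow_succ]
    exact mul_mem_lower ih hX

lemma isNilpotent_of_mem_lower (hX : X ∈ lower K g (-1)) : IsNilpotent X := by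
  obtain ⟨n, hn⟩ := exists_lower_eq_bot (K := K) g
  refine ⟨n, ?_⟩
  have := pow_mem_lower hX n
  rwa [mul_neg_one, hn, Submodule.mem_bot] at this

lemma diagonal_commutator_eq_smul (hX : X ∈ homog K g c) :
    innerDer K (Matrix.diagonal fun i => (g i : K)) X = (c : K) • X := by
  ext i j
  simp only [innerDer_apply, Matrix.sub_apply, Matrix.diagonal_mul, Matrix.mul_diagonal,
    Matrix.smul_apply, smul_eq_mul]
  by_cases h0 : X i j = 0
  · simp [h0]
  · rw [← hX i j h0]; push_cast; ring

lemma mem_homog_iff_commutator [CharZero K] :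
    X ∈ homog K g c ↔ innerDer K (Matrix.diagonal fun i => (g i : K)) X = (c : K) • X := by
  refine ⟨diagonal_commutator_eq_smul, fun h i j h0 => ?_⟩
  have := congrFun (congrFun h i) j
  simp only [innerDer_apply, Matrix.sub_apply, Matrix.diagonal_mul, Matrix.mul_diagonal,
    Matrix.smul_apply, smul_eq_mul] at this
  have h1 : ((g i - g j : ℤ) : K) = (c : K) := by
    apply mul_right_cancel₀ h0
    rw [← this]; push_cast; ring
  exact_mod_cast h1

/-- Unipotent matrices preserving a second grading have inverses of the same kind. -/
lemma exists_inverse_one_add (hX : X ∈ lower K g (-1)) (hX' : X ∈ homog K g' 0) :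
    ∃ Z ∈ lower K g (-1), Z ∈ homog K g' 0 ∧ (1 + Z) * (1 + X) = 1 ∧ (1 + X) * (1 + Z) = 1 := by
  obtain ⟨n, hn⟩ := isNilpotent_of_mem_lower hX
  set T := ∑ i ∈ Finset.range n, (-X) ^ i with hT
  have hn' : (-X) ^ n = 0 := by rw [neg_pow, hn, mul_zero]
  have h1 : T * (1 + X) = 1 := by
    have := geom_sum_mul_neg (-X) n
    rwa [hn', sub_neg_eq_add, sub_zero] at this
  have h2 : (1 + X) * T = 1 := by
    have := mul_neg_geom_sum (-X) n
    rwa [hn', sub_neg_eq_add, sub_zero] at this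
  have hTl : T ∈ lower K g 0 := Submodule.sum_mem _ fun i _ =>
    lower_mono (by simp) (pow_mem_lower (Submodule.neg_mem _ hX) i)
  have hTh : T ∈ homog K g' 0 := Submodule.sum_mem _ fun i _ => by
    simpa using pow_mem_homog (Submodule.neg_mem _ hX') i
  have hT1 : T = 1 + -(X * T) := by
    rw [add_mul, one_mul] at h2
    rw [← h2]; abel
  refine ⟨-(X * T), Submodule.neg_mem _ ?_, Submodule.neg_mem _ ?_, ?_, ?_⟩
  · simpa using mul_mem_lower hX hTl
  · simpa using mul_mem_homog hX' hTh
  · rw [← hT1, h1]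
  · rw [← hT1, h2]

end Graded

section Lefschetz

variable {K ι : Type*} [Field K] [Fintype ι] [DecidableEq ι]

/-- `A ^ ℓ` maps the weight space `h = ℓ` isomorphically onto the weight space `h = -ℓ`. -/
structure IsLefschetz (h : ι → ℤ) (A : Matrix ι ι K) : Prop where
  inj : ∀ (ℓ : ℕ) (x : ι → K), (∀ i, x i ≠ 0 → h i = ℓ) → (A ^ ℓ).mulVec x = 0 → x = 0
  surj : ∀ (ℓ : ℕ) (i : ι), h i = -ℓ →
    ∃ x : ι → K, (∀ j, x j ≠ 0 → h j = ℓ) ∧ (A ^ ℓ).mulVec x = Pi.single i 1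

/-- The projection onto the weight space `h = m`. -/
def weightProj (K : Type*) {ι : Type*} [Field K] [DecidableEq ι] (h : ι → ℤ) (m : ℤ) :
    Matrix ι ι K :=
  Matrix.diagonal fun i => if h i = m then 1 else 0

lemma trace_weightProj_mul (h : ι → ℤ) (m : ℤ) (Z : Matrix ι ι K) :
    (weightProj K h m * Z).trace = ∑ i with h i = m, Z i i := by
  simp [weightProj, Matrix.trace, Matrix.diagonal_mul, Finset.sum_filter]

variable {h : ι → ℤ} {A : Matrix ι ι K}

lemma pow_mul_weightProj (hA : A ∈ homog K h (-2)) (ℓ : ℕ) :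
    A ^ ℓ * weightProj K h ℓ = weightProj K h (-ℓ) * A ^ ℓ := by
  ext i j
  rw [weightProj, weightProj, Matrix.mul_diagonal, Matrix.diagonal_mul]
  by_cases h0 : (A ^ ℓ) i j = 0
  · simp [h0]
  · have := pow_mem_homog hA ℓ i j h0
    by_cases h1 : h j = ℓ
    · rw [if_pos h1, if_pos (by omega)]; simp
    · rw [if_neg h1, if_neg (by omega)]; simp

lemma IsLefschetz.exists_partial_inverse (hA : A ∈ homog K h (-2)) (hL : IsLefschetz h A)
    (ℓ : ℕ) : ∃ S : Matrix ι ι K, S * weightProj K h (-ℓ) = S ∧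
      A ^ ℓ * S = weightProj K h (-ℓ) ∧ S * A ^ ℓ * weightProj K h ℓ = weightProj K h ℓ := by
  choose s hs hs' using hL.surj ℓ
  set S : Matrix ι ι K := Matrix.of fun j i => if hi : h i = -ℓ then s i hi j else 0 with hS
  have hSP : S * weightProj K h (-ℓ) = S := by
    ext j i
    rw [weightProj, Matrix.mul_diagonal, hS, Matrix.of_apply]
    split_ifs <;> simp
  have hAS : A ^ ℓ * S = weightProj K h (-ℓ) := by
    ext j i
    rw [weightProj, Matrix.diagonal_apply, Matrix.mul_apply]
    by_cases hi : h i = -ℓ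
    · have := congrFun (hs' i hi) j
      simp only [Matrix.mulVec, dotProduct] at this
      simp only [hS, Matrix.of_apply, dif_pos hi]
      rw [this, Pi.single_apply]
      by_cases hji : j = i
      · simp [hji, hi]
      · simp [hji]
    · simp only [hS, Matrix.of_apply, dif_neg hi, mul_zero, Finset.sum_const_zero]
      by_cases hji : j = i
      · simp [hji, hi]
      · simp [hji]
  refine ⟨S, hSP, hAS, ?_⟩
  have hzero : A ^ ℓ * (S * A ^ ℓ * weightProj K h ℓ - weightProj K h ℓ) = 0 := by
    have hidem : weightProj K h (-ℓ) * weightProj K h (-ℓ) = weightProj K h (-(ℓ : ℤ)) := by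
      simp [weightProj, Matrix.diagonal_mul_diagonal]
    rw [mul_sub, mul_assoc, ← mul_assoc, hAS, pow_mul_weightProj hA, ← mul_assoc, hidem, sub_self]
  rw [← sub_eq_zero]
  ext i j
  refine congrFun (hL.inj ℓ (fun k => (S * A ^ ℓ * weightProj K h ℓ - weightProj K h ℓ) k j)
    (fun k hk => ?_) ?_) i
  · by_contra hne
    apply hk
    have h1 : ∀ m, S k m = 0 := by
      intro m
      rw [hS, Matrix.of_apply]
      split_ifs with hm
      · by_contra h2
        exact hne (hs m hm k h2)
      · rfl
    rw [Matrix.sub_apply, mul_assoc, Matrix.mul_apply, weightProj, Matrix.diagonal_apply]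
    simp [h1, hne]
  · ext k
    exact congrFun (congrFun hzero k) j

/-- The weight endomorphism is orthogonal, for the trace form, to the centralizer of `A`. -/
lemma IsLefschetz.trace_mul_diagonal_eq_zero [CharZero K] (hA : A ∈ homog K h (-2))
    (hL : IsLefschetz h A) {Z : Matrix ι ι K} (hZ : Z * A = A * Z) :
    (Z * Matrix.diagonal fun i => (h i : K)).trace = 0 := by
  set t : ℤ → K := fun m => ∑ i with h i = m, Z i i with ht
  have hnat (ℓ : ℕ) : t ℓ = t (-ℓ) := by
    obtain ⟨S, hSP, hAS, hSA⟩ := hL.exists_partial_inverse hA ℓ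
    have hZA : Z * A ^ ℓ = A ^ ℓ * Z := (Commute.pow_right (show Commute Z A from hZ) ℓ).eq
    simp only [ht]
    rw [← trace_weightProj_mul, ← trace_weightProj_mul, ← hSA, ← hAS]
    calc (S * A ^ ℓ * weightProj K h ℓ * Z).trace
        = (S * weightProj K h (-ℓ) * (A ^ ℓ * Z)).trace := by
          rw [mul_assoc S, pow_mul_weightProj hA]; noncomm_ring
      _ = (S * Z * A ^ ℓ).trace := by rw [hSP, ← hZA, mul_assoc]
      _ = (A ^ ℓ * S * Z).trace := by rw [Matrix.trace_mul_comm, mul_assoc]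
  have hsymm (m : ℤ) : t m = t (-m) := by
    rcases Int.eq_nat_or_neg m with ⟨ℓ, rfl | rfl⟩
    · exact hnat ℓ
    · rw [neg_neg, hnat ℓ]
  obtain ⟨B, hB⟩ : ∃ B : ℤ, ∀ i, h i ∈ Finset.Icc (-B) B := by
    obtain ⟨B, hB⟩ := (Set.finite_range fun i => |h i|).bddAbove
    exact ⟨B, fun i => Finset.mem_Icc.mpr (abs_le.mp (hB ⟨i, rfl⟩))⟩
  have h1 : (Z * Matrix.diagonal fun i => (h i : K)).trace
      = ∑ m ∈ Finset.Icc (-B) B, (m : K) * t m := by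
    rw [Matrix.trace, ← Finset.sum_fiberwise_of_maps_to (fun i _ => hB i)]
    refine Finset.sum_congr rfl fun m _ => ?_
    rw [ht, Finset.mul_sum]
    refine Finset.sum_congr rfl fun i hi => ?_
    rw [Matrix.diag_apply, Matrix.mul_diagonal, (Finset.mem_filter.mp hi).2, mul_comm]
  have h2 : ∑ m ∈ Finset.Icc (-B) B, (m : K) * t m
      = -∑ m ∈ Finset.Icc (-B) B, (m : K) * t m := by
    rw [← Finset.sum_neg_distrib]
    refine Finset.sum_bij' (fun m _ => -m) (fun m _ => -m) ?_ ?_ ?_ ?_ ?_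
    · intro m hm; rw [Finset.mem_Icc] at hm ⊢; omega
    · intro m hm; rw [Finset.mem_Icc] at hm ⊢; omega
    · simp
    · simp
    · intro m _
      rw [← hsymm m]; push_cast; ring
  rw [h1]
  exact self_eq_neg.mp h2

/-- A Lefschetz operator is the lowering operator of an `sl₂`-triple. -/
lemma IsLefschetz.exists_raising [CharZero K] (hA : A ∈ homog K h (-2)) (hL : IsLefschetz h A) :
    ∃ E : Matrix ι ι K, E * A - A * E = Matrix.diagonal fun i => (h i : K) := by
  by_contra hne
  set H : Matrix ι ι K := Matrix.diagonal fun i => (h i : K) with hH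
  have hmem : H ∉ LinearMap.range (innerDer K A) := by
    rintro ⟨E, hE⟩
    refine hne ⟨-E, ?_⟩
    rw [← hE, innerDer_apply]; noncomm_ring
  obtain ⟨φ, hφ, hle⟩ := Submodule.exists_le_ker_of_notMem hmem
  set Z : Matrix ι ι K := Matrix.of fun i j => φ (Matrix.single j i 1) with hZ
  have hrep (X : Matrix ι ι K) : φ X = (Z * X).trace := by
    conv_lhs => rw [Matrix.matrix_eq_sum_single X]
    simp only [map_sum, Matrix.trace, Matrix.diag_apply, Matrix.mul_apply]
    rw [Finset.sum_comm]
    refine Finset.sum_congr rfl fun i _ => Finset.sum_congr rfl fun j _ => ?_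
    rw [hZ, Matrix.of_apply, ← mul_one (X j i), ← smul_eq_mul (X j i), ← Matrix.smul_single,
      map_smul]
    simp [mul_comm]
  have hcomm : Z * A = A * Z := by
    rw [← sub_eq_zero]
    refine Matrix.ext_iff_trace_mul_right.mpr fun X => ?_
    have h1 : φ (innerDer K A X) = 0 := hle ⟨X, rfl⟩
    rw [hrep, innerDer_apply] at h1
    rw [zero_mul, Matrix.trace_zero, ← h1, sub_mul, mul_sub, Matrix.trace_sub, Matrix.trace_sub,
      mul_assoc, mul_assoc A, Matrix.trace_mul_comm A, mul_assoc]
  exact hφ (by rw [hrep, hL.trace_mul_diagonal_eq_zero hA hcomm])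

end Lefschetz

section Primitive

variable {K ι : Type*} [Field K]

lemma mem_homog_sub {g g' : ι → ℤ} {c d : ℤ} {X : Matrix ι ι K} (hX : X ∈ homog K g c)
    (hX' : X ∈ homog K g' d) : X ∈ homog K (g - g') (c - d) := by
  intro i j h0
  have h1 := hX i j h0
  have h2 := hX' i j h0
  simp only [Pi.sub_apply]
  omega

variable [Fintype ι] [DecidableEq ι]

lemma innerDer_mem_homog {g : ι → ℤ} {c d : ℤ} {A X : Matrix ι ι K}
    (hA : A ∈ homog K g d) (hX : X ∈ homog K g c) : innerDer K A X ∈ homog K g (d + c) :=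
  Submodule.sub_mem _ (mul_mem_homog hA hX) (add_comm c d ▸ mul_mem_homog hX hA)

lemma innerDer_pow_mem_homog {g : ι → ℤ} {c d : ℤ} {A X : Matrix ι ι K}
    (hA : A ∈ homog K g d) (hX : X ∈ homog K g c) (n : ℕ) :
    (innerDer K A ^ n) X ∈ homog K g (n * d + c) := by
  induction n with
  | zero => simpa using hX
  | succ n ih =>
    rw [pow_succ', Module.End.mul_apply,
      show ((n + 1 : ℕ) : ℤ) * d + c = d + (n * d + c) by push_cast; ring]
    exact innerDer_mem_homog hA ih

lemma isNilpotent_of_mem_homog {g : ι → ℤ} {c : ℤ} (hc : c ≠ 0) {X : Matrix ι ι K}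
    (hX : X ∈ homog K g c) : IsNilpotent X := by
  rcases hc.lt_or_gt with h | h
  · exact isNilpotent_of_mem_lower (lower_mono (by omega) (homog_le_lower hX))
  · refine isNilpotent_of_mem_lower (g := -g) fun i j h0 => ?_
    have := hX i j h0
    simp only [Pi.neg_apply]
    omega

variable [CharZero K] {y r : ι → ℤ} {A : Matrix ι ι K}

lemma IsLefschetz.exists_raising_homog (hAy : A ∈ homog K y 0) (hAr : A ∈ homog K r (-2))
    (hL : IsLefschetz (r - y) A) :
    ∃ E : Matrix ι ι K, E ∈ homog K y 0 ∧ E ∈ homog K r 2 ∧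
      E * A - A * E = Matrix.diagonal fun i => ((r - y) i : K) := by
  obtain ⟨E, hE⟩ := hL.exists_raising (mem_homog_sub hAr hAy)
  refine ⟨component K r 2 (component K y 0 E),
    component_mem_homog_of_mem (component_mem_homog _), component_mem_homog _, ?_⟩
  have h1 := congrArg (fun X => component K r 0 (component K y 0 X)) hE
  simp only [map_sub] at h1
  rw [component_mul_of_mem_homog_right hAy, component_mul_of_mem_homog_left hAy,
    component_mul_of_mem_homog_right hAr, component_mul_of_mem_homog_left hAr,
    component_of_mem_homog (diagonal_mem_homog _), if_pos rfl,
    component_of_mem_homog (diagonal_mem_homog _), if_pos rfl] at h1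
  simpa using h1

/-- `(ad A) ^ j` is injective in degree `j`, and every element of degree `j - 2` is, modulo the
image of `ad A`, annihilated by `(ad A) ^ (j - 1)`. -/
lemma IsLefschetz.innerDer_pow (hAy : A ∈ homog K y 0) (hAr : A ∈ homog K r (-2))
    (hL : IsLefschetz (r - y) A) (j : ℕ) :
    (∀ X ∈ homog K y (-j), X ∈ homog K r 0 → (innerDer K A ^ j) X = 0 → X = 0) ∧
    (1 ≤ j → ∀ R ∈ homog K y (-j), R ∈ homog K r (-2) →
      ∃ Z ∈ homog K y (-j), Z ∈ homog K r 0 ∧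
        (innerDer K A ^ (j - 1)) (innerDer K A Z + R) = 0) := by
  obtain ⟨E, hEy, hEr, hEA⟩ := hL.exists_raising_homog hAy hAr
  set H : Matrix ι ι K := Matrix.diagonal fun i => ((r - y) i : K) with hH
  have hweight {c d : ℤ} {X : Matrix ι ι K} (hy : X ∈ homog K y c) (hr : X ∈ homog K r d) :
      innerDer K H X = ((d - c : ℤ) : K) • X :=
    diagonal_commutator_eq_smul (mem_homog_sub hr hy)
  have hba : innerDer K E * innerDer K A
      - innerDer K A * innerDer K E = innerDer K H := by
    rw [innerDer_commutator, hEA]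
  have hha : innerDer K H * innerDer K A
      - innerDer K A * innerDer K H = (-2 : K) • innerDer K A := by
    rw [innerDer_commutator, ← innerDer_apply (K := K), hweight hAy hAr, innerDer_smul]
    norm_num
  have hhb : innerDer K H * innerDer K E
      - innerDer K E * innerDer K H = (2 : K) • innerDer K E := by
    rw [innerDer_commutator, ← innerDer_apply (K := K), hweight hEy hEr, innerDer_smul]
    norm_num
  have hnA : IsNilpotent (innerDer K A) :=
    isNilpotent_innerDer (isNilpotent_of_mem_homog (by norm_num) hAr)
  have hnE : IsNilpotent (innerDer K E) :=
    isNilpotent_innerDer (isNilpotent_of_mem_homog (by norm_num) hEr)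
  have hinjA : ∀ X ∈ homog K y (-j), X ∈ homog K r 0 → (innerDer K A ^ j) X = 0 → X = 0 :=
    fun X hy hr hX => sl2_lower_pow_injective hba hha hhb hnE j j le_rfl X
      (by simpa using hweight hy hr) hX
  have hinjE (X : Matrix ι ι K) (hy : X ∈ homog K y (-j)) (hr : X ∈ homog K r (-2 * j))
      (hX : (innerDer K E ^ j) X = 0) : X = 0 := by
    refine sl2_lower_pow_injective (b := innerDer K A) (h := innerDer K (-H))
      ?_ ?_ ?_ hnA j j le_rfl X ?_ hX
    · rw [innerDer_commutator, ← hEA, neg_sub]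
    · rw [innerDer_commutator, show -H * E - E * -H = -(innerDer K H E) by
        rw [innerDer_apply]; noncomm_ring, hweight hEy hEr, ← neg_smul, innerDer_smul]
      norm_num
    · rw [innerDer_commutator, show -H * A - A * -H = -(innerDer K H A) by
        rw [innerDer_apply]; noncomm_ring, hweight hAy hAr, ← neg_smul, innerDer_smul]
      norm_num
    · rw [show innerDer K (-H) X = -(innerDer K H X) by
        simp only [innerDer_apply]; noncomm_ring, hweight hy hr, ← neg_smul]
      congr 1
      push_cast; ring
  refine ⟨hinjA, fun hj R hRy hRr => ?_⟩
  set U : Submodule K (Matrix ι ι K) := homog K y (-j) ⊓ homog K r 0 with hU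
  have hAj {X : Matrix ι ι K} (hX : X ∈ U) : (innerDer K A ^ j) X ∈ homog K y (-j) ∧
      (innerDer K A ^ j) X ∈ homog K r (-2 * j) := by
    constructor
    · simpa using innerDer_pow_mem_homog hAy hX.1 j
    · simpa [mul_comm] using innerDer_pow_mem_homog hAr hX.2 j
  have hEj {X : Matrix ι ι K} (hy : X ∈ homog K y (-j)) (hr : X ∈ homog K r (-2 * j)) :
      (innerDer K E ^ j) X ∈ U := by
    constructor
    · simpa using innerDer_pow_mem_homog hEy hy j
    · have := innerDer_pow_mem_homog hEr hr j
      rwa [show (j : ℤ) * 2 + -2 * j = 0 by ring] at this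
  set f : U →ₗ[K] U := LinearMap.restrict (innerDer K E ^ j * innerDer K A ^ j)
    (fun X hX => hEj (hAj hX).1 (hAj hX).2) with hf
  have hfi : Function.Injective f := by
    rw [← LinearMap.ker_eq_bot, LinearMap.ker_eq_bot']
    intro X hX
    have h1 := congrArg Subtype.val hX
    simp only [hf, LinearMap.coe_restrict_apply, Module.End.mul_apply,
      Submodule.coe_zero] at h1
    exact Subtype.ext (hinjA X X.2.1 X.2.2 (hinjE _ (hAj X.2).1 (hAj X.2).2 h1))
  have hRy' : (innerDer K A ^ (j - 1)) R ∈ homog K y (-j) := by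
    simpa using innerDer_pow_mem_homog hAy hRy (j - 1)
  have hRr' : (innerDer K A ^ (j - 1)) R ∈ homog K r (-2 * j) := by
    have := innerDer_pow_mem_homog hAr hRr (j - 1)
    rwa [show ((j - 1 : ℕ) : ℤ) * (-2) + -2 = -2 * j by omega] at this
  obtain ⟨Z, hZ⟩ := LinearMap.injective_iff_surjective.mp hfi ⟨_, hEj hRy' hRr'⟩
  have hZ1 := congrArg Subtype.val hZ
  simp only [hf, LinearMap.coe_restrict_apply, Module.End.mul_apply] at hZ1
  have hZ2 : (innerDer K A ^ j) Z = (innerDer K A ^ (j - 1)) R := by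
    rw [← sub_eq_zero]
    refine hinjE _ (Submodule.sub_mem _ (hAj Z.2).1 hRy') (Submodule.sub_mem _ (hAj Z.2).2 hRr') ?_
    rw [map_sub, hZ1, sub_self]
  refine ⟨-Z, Submodule.neg_mem _ Z.2.1, Submodule.neg_mem _ Z.2.2, ?_⟩
  rw [map_add, map_neg, map_neg, ← Module.End.mul_apply, ← pow_succ, Nat.sub_add_cancel hj, hZ2,
    neg_add_cancel]

end Primitive

section Normalization

variable {K ι : Type*} [Field K] [Fintype ι] [DecidableEq ι] {y r : ι → ℤ}

/-- Effect of conjugation by `1 + X`, with `X` of degree at most `-j`, on the components of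
degree at least `-j`. -/
lemma component_conj {j : ℤ} (hj : 0 < j) {X N N' : Matrix ι ι K}
    (hX : X ∈ lower K y (-j)) (hN : N ∈ lower K y 0) (hN' : N' ∈ lower K y 0)
    (h : N' + X * N' = N + N * X) :
    (∀ i < j, component K y (-i) N' = component K y (-i) N) ∧
    component K y (-j) N' =
      component K y (-j) N + innerDer K (component K y 0 N) (component K y (-j) X) := by
  have hXN : X * N' ∈ lower K y (-j) := by simpa using mul_mem_lower hX hN'
  have hNX : N * X ∈ lower K y (-j) := by simpa using mul_mem_lower hN hX
  have h1 : ∀ i < j, component K y (-i) N' = component K y (-i) N := by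
    intro i hi
    have := congrArg (component K y (-i)) h
    rwa [map_add, map_add, component_eq_zero hXN (by omega), component_eq_zero hNX (by omega),
      add_zero, add_zero] at this
  refine ⟨h1, ?_⟩
  have h2 := congrArg (component K y (-j)) h
  have h3 := component_mul_of_mem_lower hX hN'
  have h4 := component_mul_of_mem_lower hN hX
  have h0 := h1 0 hj
  rw [neg_zero] at h0
  rw [add_zero] at h3
  rw [zero_add] at h4
  rw [map_add, map_add, h3, h4, h0] at h2
  rw [innerDer_apply, eq_sub_of_add_eq h2]
  abel

/-- The conditions on `N` relative to the grading `y`: each component of degree `-k`, `k > 0`,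
is annihilated by `(ad N₀) ^ (k - 1)`. -/
def IsNormalized (y : ι → ℤ) (N : Matrix ι ι K) : Prop :=
  ∀ k : ℕ, 0 < k → (innerDer K (component K y 0 N) ^ (k - 1)) (component K y (-k) N) = 0

variable [CharZero K]

lemma eq_zero_of_isNormalized {X N N' : Matrix ι ι K}
    (hX : X ∈ lower K y (-1)) (hXr : X ∈ homog K r 0)
    (hN : N ∈ lower K y 0) (hNr : N ∈ homog K r (-2)) (hN' : N' ∈ lower K y 0)
    (hL : IsLefschetz (r - y) (component K y 0 N))
    (hconj : (1 + X) * N' = N * (1 + X)) (hnorm : IsNormalized y N)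
    (hnorm' : IsNormalized y N') : X = 0 := by
  rw [add_mul, mul_add, one_mul, mul_one] at hconj
  have key (n : ℕ) : X ∈ lower K y (-n - 1) := by
    induction n with
    | zero => simpa using hX
    | succ n ih =>
      have ih' : X ∈ lower K y (-((n + 1 : ℕ) : ℤ)) := by
        rwa [show -((n + 1 : ℕ) : ℤ) = -n - 1 by push_cast; ring]
      refine mem_lower_pred ih' ?_
      obtain ⟨h1, h2⟩ := component_conj (by omega) ih' hN hN' hconj
      have h0 := h1 0 (by omega)
      rw [neg_zero] at h0
      refine (hL.innerDer_pow (component_mem_homog _) (component_mem_homog_of_mem hNr) (n + 1)).1 _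
        (component_mem_homog _) (component_mem_homog_of_mem hXr) ?_
      have h3 := hnorm (n + 1) (by omega)
      have h4 := hnorm' (n + 1) (by omega)
      rw [h0, h2, map_add, h3, zero_add, ← Module.End.mul_apply, ← pow_succ] at h4
      simpa using h4
  obtain ⟨n, hn⟩ := exists_lower_eq_bot (K := K) y
  have := lower_mono (by omega) (key n) (d := -(n : ℤ))
  rwa [hn, Submodule.mem_bot] at this

lemma exists_isNormalized {N : Matrix ι ι K}
    (hN : N ∈ lower K y 0) (hNr : N ∈ homog K r (-2))
    (hL : IsLefschetz (r - y) (component K y 0 N)) :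
    ∃ X ∈ lower K y (-1), ∃ N' ∈ lower K y 0, X ∈ homog K r 0 ∧
      (1 + X) * N' = N * (1 + X) ∧ IsNormalized y N' := by
  have key (n : ℕ) : ∃ X ∈ lower K y (-1), ∃ N' ∈ lower K y 0, X ∈ homog K r 0 ∧
      N' ∈ homog K r (-2) ∧ (1 + X) * N' = N * (1 + X) ∧
      component K y 0 N' = component K y 0 N ∧
      ∀ k : ℕ, 0 < k → k ≤ n →
        (innerDer K (component K y 0 N) ^ (k - 1)) (component K y (-k) N') = 0 := by
    induction n with
    | zero =>
      exact ⟨0, zero_mem _, N, hN, zero_mem _, hNr, by simp, rfl, fun k h1 h2 => by omega⟩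
    | succ n ih =>
      obtain ⟨X, hX, N', hN', hXr, hNr', hconj, h0, hprim⟩ := ih
      obtain ⟨Z, hZy, hZr, hZ⟩ := (hL.innerDer_pow (component_mem_homog _)
        (component_mem_homog_of_mem hNr) (n + 1)).2 (by omega) (component K y (-(n + 1 : ℕ)) N')
        (component_mem_homog _) (component_mem_homog_of_mem hNr')
      have hZl := homog_le_lower hZy
      have hZ1 : Z ∈ lower K y (-1) := lower_mono (by push_cast; omega) hZl
      obtain ⟨T, hT, hTr, hT1, hT2⟩ := exists_inverse_one_add hZ1 hZr
      have hone : ∀ {S : Matrix ι ι K}, S ∈ lower K y (-1) → 1 + S ∈ lower K y 0 := fun hS =>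
        add_mem (homog_le_lower one_mem_homog) (lower_mono (by omega) hS)
      have honer : ∀ {S : Matrix ι ι K}, S ∈ homog K r 0 → 1 + S ∈ homog K r 0 := fun hS =>
        add_mem one_mem_homog hS
      have hN'' : (1 + T) * N' * (1 + Z) ∈ lower K y 0 := by
        simpa using mul_mem_lower (mul_mem_lower (hone hT) hN') (hone hZ1)
      have hconj' : (1 + Z) * ((1 + T) * N' * (1 + Z)) = N' * (1 + Z) := by
        rw [← mul_assoc, ← mul_assoc, hT2, one_mul]
      have hconj'' := hconj'
      rw [add_mul, mul_add N', one_mul, mul_one] at hconj''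
      obtain ⟨h1, h2⟩ := component_conj (by omega) hZl hN' hN'' hconj''
      have h1' := h1 0 (by omega)
      rw [neg_zero] at h1'
      refine ⟨X + Z + X * Z, ?_, (1 + T) * N' * (1 + Z), hN'', ?_, ?_, ?_, ?_, ?_⟩
      · exact add_mem (add_mem hX hZ1) (lower_mono (by omega) (mul_mem_lower hX hZ1))
      · exact add_mem (add_mem hXr hZr) (by simpa using mul_mem_homog hXr hZr)
      · simpa using mul_mem_homog (mul_mem_homog (honer hTr) hNr') (honer hZr)
      · rw [show 1 + (X + Z + X * Z) = (1 + X) * (1 + Z) by noncomm_ring, mul_assoc, hconj',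
          ← mul_assoc, hconj, mul_assoc]
      · rw [h1', h0]
      · intro k hk hkn
        rcases Nat.lt_or_ge k (n + 1) with hlt | hge
        · rw [h1 k (by omega)]
          exact hprim k hk (by omega)
        · obtain rfl : k = n + 1 := le_antisymm hkn hge
          rw [h2, h0, component_of_mem_homog hZy, if_pos rfl, add_comm (component K y _ N')]
          exact hZ
  obtain ⟨n, hn⟩ := exists_lower_eq_bot (K := K) y
  obtain ⟨X, hX, N', hN', hXr, -, hconj, h0, hprim⟩ := key n
  refine ⟨X, hX, N', hN', hXr, hconj, fun k hk => ?_⟩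
  rw [h0]
  rcases le_or_gt k n with hkn | hkn
  · exact hprim k hk hkn
  · have : component K y (-k) N' ∈ lower K y (-n) :=
      lower_mono (by omega) (homog_le_lower (component_mem_homog _))
    rw [hn, Submodule.mem_bot] at this
    rw [this, map_zero]

end Normalization

section Transfer

variable {K V ι : Type*} [Field K] [AddCommGroup V] [Module K V]

/-- A basis of eigenvectors of `Yr`, with eigenvalues `r`, which is adapted to the filtration `W`
with jumps `y`. -/
structure IsAdaptedBasis (b : Module.Basis ι K V) (y r : ι → ℤ) (W : ℤ → Submodule K V)
    (Yr : Module.End K V) : Prop where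
  mem_iff : ∀ k x, x ∈ W k ↔ ∀ i, b.repr x i ≠ 0 → y i ≤ k
  apply : ∀ i, Yr (b i) = (r i : K) • b i

lemma exists_basis_adapted_aux {W : ℤ → Submodule K V} (hmono : Monotone W)
    (hbot : ∃ a : ℤ, ∀ k ≤ a, W k = ⊥) (E : Set V)
    (hE : ∀ k, W k ≤ Submodule.span K (E ∩ W k)) (m : ℤ) :
    ∃ s ⊆ E ∩ W m, LinearIndepOn K id s ∧ ∀ k ≤ m, W k ≤ Submodule.span K (s ∩ W k) := by
  obtain ⟨a, ha⟩ := hbot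
  rcases le_total m a with hma | ham
  · exact ⟨∅, Set.empty_subset _, linearIndepOn_empty K id, fun k hk => by
      rw [ha k (hk.trans hma)]; exact bot_le⟩
  induction m, ham using Int.leInduction with
  | base =>
    exact ⟨∅, Set.empty_subset _, linearIndepOn_empty K id, fun k hk => by
      rw [ha k hk]; exact bot_le⟩
  | succ m _ ih =>
    obtain ⟨s, hsE, hs, hspan⟩ := ih
    have hsub : s ⊆ E ∩ W (m + 1) := fun x hx =>
      ⟨(hsE hx).1, hmono (by omega) (hsE hx).2⟩
    obtain ⟨t, htE, hst, htspan, ht⟩ := exists_linearIndepOn_id_extension hs hsub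
    refine ⟨t, htE, ht, fun k hk => ?_⟩
    rcases hk.lt_or_eq with hlt | rfl
    · exact (hspan k (by omega)).trans
        (Submodule.span_mono (Set.inter_subset_inter_left _ hst))
    · rw [Set.inter_eq_left.mpr (htE.trans Set.inter_subset_right)]
      exact (hE _).trans (Submodule.span_le.mpr htspan)

lemma exists_isAdaptedBasis {W : ℤ → Submodule K V} [FiniteDimensional K V] (hmono : Monotone W)
    (hbot : ∃ a : ℤ, ∀ k ≤ a, W k = ⊥) (htop : ∃ b : ℤ, ∀ k, b ≤ k → W k = ⊤)
    (Yr : Module.End K V) (hYr : ⨆ p : ℤ, Module.End.eigenspace Yr (p : K) = ⊤)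
    (hYrW : ∀ k, ∀ x ∈ W k, Yr x ∈ W k) :
    ∃ (s : Set V) (b : Module.Basis s K V) (y r : s → ℤ), IsAdaptedBasis b y r W Yr := by
  set E : Set V := {x | ∃ p : ℤ, Yr x = (p : K) • x} with hEdef
  have hint (μ : K) (hμ : ¬ ∃ p : ℤ, (p : K) = μ) : Module.End.eigenspace Yr μ = ⊥ := by
    have hdis := Module.End.eigenspaces_iSupIndep Yr μ
    rw [show ⨆ ν, ⨆ _ : ν ≠ μ, Module.End.eigenspace Yr ν = ⊤ from ?_] at hdis
    · exact disjoint_top.mp hdis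
    · rw [eq_top_iff, ← hYr]
      exact iSup_le fun p => le_iSup₂_of_le (p : K) (fun h => hμ ⟨p, h⟩) le_rfl
  have hE (k : ℤ) : W k ≤ Submodule.span K (E ∩ W k) := by
    have htop' : ⨆ μ, Module.End.genEigenspace Yr μ 1 = ⊤ := by
      rw [eq_top_iff, ← hYr]
      exact iSup_le fun p => le_iSup (fun μ => Module.End.genEigenspace Yr μ 1) (p : K)
    rw [Submodule.eq_iSup_inf_genEigenspace 1 (hYrW k) htop']
    refine iSup_le fun μ x hx => ?_
    have hx2 : x ∈ Module.End.eigenspace Yr μ := hx.2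
    by_cases hμ : ∃ p : ℤ, (p : K) = μ
    · obtain ⟨p, rfl⟩ := hμ
      rw [← Submodule.eq_iSup_inf_genEigenspace 1 (hYrW k) htop']
      exact Submodule.subset_span ⟨⟨p, Module.End.mem_eigenspace_iff.mp hx2⟩, hx.1⟩
    · rw [hint μ hμ, Submodule.mem_bot] at hx2
      rw [hx2]; exact zero_mem _
  obtain ⟨m, hm⟩ := htop
  obtain ⟨s, hsE, hs, hspan⟩ := exists_basis_adapted_aux hmono hbot E hE m
  have htopspan : ⊤ ≤ Submodule.span K (Set.range (Subtype.val : s → V)) := by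
    rw [Subtype.range_coe, ← hm m le_rfl]
    exact (hspan m le_rfl).trans (Submodule.span_mono Set.inter_subset_left)
  set b : Module.Basis s K V := Module.Basis.mk hs htopspan with hb
  have hbi (i : s) : b i = i := by exact Module.Basis.mk_apply hs htopspan i
  have hex (i : s) : ∃ n : ℤ, (i : V) ∈ W n ∧ ∀ z : ℤ, (i : V) ∈ W z → n ≤ z := by
    obtain ⟨a, ha⟩ := hbot
    refine Int.exists_least_of_bdd ⟨a, fun z hz => ?_⟩ ⟨m, by rw [hm m le_rfl]; trivial⟩
    by_contra hlt
    rw [ha z (by omega), Submodule.mem_bot, ← hbi] at hz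
    exact b.ne_zero i hz
  choose y hy1 hy2 using hex
  choose r hr using fun i : s => (hsE i.2).1
  refine ⟨s, b, y, r, fun k x => ⟨fun hx => ?_, fun hx => ?_⟩, fun i => by rw [hbi, hr]⟩
  · have hx' : x ∈ Submodule.span K (s ∩ W k) := by
      rcases le_total k m with hk | hk
      · exact hspan k hk hx
      · have : W k = W m := by rw [hm m le_rfl, hm k hk]
        rw [this]
        rw [this] at hx
        exact hspan m le_rfl hx
    have himg : s ∩ W k = b '' {i | y i ≤ k} := by
      ext v
      constructor
      · rintro ⟨hv, hvk⟩
        exact ⟨⟨v, hv⟩, hy2 _ _ hvk, hbi _⟩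
      · rintro ⟨i, hi, rfl⟩
        rw [hbi]
        exact ⟨i.2, hmono hi (hy1 i)⟩
    rw [himg, Module.Basis.mem_span_image] at hx'
    exact fun i hi => hx' (Finsupp.mem_support_iff.mpr hi)
  · rw [← b.linearCombination_repr x, Finsupp.linearCombination_apply]
    refine Submodule.sum_mem _ fun i hi => Submodule.smul_mem _ _ ?_
    rw [hbi]
    exact hmono (hx i (Finsupp.mem_support_iff.mp hi)) (hy1 i)

lemma IsAdaptedBasis.basis_mem {b : Module.Basis ι K V} {y r : ι → ℤ} {W : ℤ → Submodule K V}
    {Yr : Module.End K V} (hb : IsAdaptedBasis b y r W Yr) (i : ι) : b i ∈ W (y i) := by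
  refine (hb.mem_iff _ _).mpr fun j hj => ?_
  by_cases h : i = j
  · rw [h]
  · simp [h] at hj

variable [Fintype ι]

lemma mem_iSup_eigenspace_iff [CharZero K] (b : Module.Basis ι K V) {a : ι → ℤ}
    {Y : Module.End K V}
    (hY : ∀ i, Y (b i) = (a i : K) • b i) (k : ℤ) (x : V) :
    x ∈ (⨆ j : ℤ, ⨆ _ : j ≤ k, Module.End.eigenspace Y (j : K)) ↔
      ∀ i, b.repr x i ≠ 0 → a i ≤ k := by
  have hrepr (x : V) (i : ι) : b.repr (Y x) i = a i * b.repr x i := by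
    classical
    conv_lhs => rw [← b.sum_repr x]
    simp only [map_sum, map_smul, hY, Finsupp.finsetSum_apply, Finsupp.smul_apply,
      Module.Basis.repr_self, smul_eq_mul]
    rw [Finset.sum_eq_single i]
    · simp [mul_comm]
    · intro j _ hj
      simp [hj]
    · simp
  constructor
  · intro hx
    have hle : (⨆ j : ℤ, ⨆ _ : j ≤ k, Module.End.eigenspace Y (j : K)) ≤
        Submodule.span K (b '' {i | a i ≤ k}) := by
      refine iSup₂_le fun j hj v hv => ?_
      rw [Module.Basis.mem_span_image]
      intro i hi
      have h1 := hrepr v i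
      rw [Module.End.mem_eigenspace_iff.mp hv, map_smul, Finsupp.smul_apply, smul_eq_mul] at h1
      have h2 : j = a i := by
        exact_mod_cast mul_right_cancel₀ (Finsupp.mem_support_iff.mp hi) h1
      rw [h2] at hj
      exact hj
    have := hle hx
    rw [Module.Basis.mem_span_image] at this
    exact fun i hi => this (Finsupp.mem_support_iff.mpr hi)
  · intro hx
    rw [← b.sum_repr x]
    refine Submodule.sum_mem _ fun i _ => ?_
    by_cases h0 : b.repr x i = 0
    · rw [h0, zero_smul]; exact zero_mem _
    · refine Submodule.smul_mem _ _ ?_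
      exact (le_iSup₂_of_le (f := fun (j : ℤ) (_ : j ≤ k) => Module.End.eigenspace Y (j : K))
        (a i) (hx i h0) le_rfl) (Module.End.mem_eigenspace_iff.mpr (hY i))

end Transfer

section GradedPieces

variable {K V : Type*} [Field K] [AddCommGroup V] [Module K V] {W M : ℤ → Submodule K V}

lemma mkQ_mem_inducedFil {k j : ℤ} (v : W k) :
    Submodule.mkQ (Submodule.comap (W k).subtype (W (k - 1))) v ∈ inducedFil W M k j ↔
      ∃ z ∈ W k, z ∈ M j ∧ z - v ∈ W (k - 1) := by
  constructor
  · rintro ⟨z, hz, hzv⟩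
    exact ⟨z, z.2, hz,
      (Submodule.Quotient.eq (Submodule.comap (W k).subtype (W (k - 1)))).mp hzv⟩
  · rintro ⟨z, hz, hzM, hzv⟩
    exact ⟨⟨z, hz⟩, hzM,
      (Submodule.Quotient.eq (Submodule.comap (W k).subtype (W (k - 1)))).mpr hzv⟩

lemma grEnd_pow_mkQ {N : Module.End K V} {k : ℤ} (h1 : ∀ x ∈ W k, N x ∈ W k)
    (h2 : ∀ x ∈ W (k - 1), N x ∈ W (k - 1)) (n : ℕ) (v : W k) :
    ∃ h : (N ^ n) v ∈ W k, (grEnd W N k h1 h2 ^ n) (Submodule.mkQ _ v) =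
      Submodule.mkQ _ (⟨(N ^ n) v, h⟩ : W k) := by
  induction n with
  | zero => exact ⟨v.2, rfl⟩
  | succ n ih =>
    obtain ⟨h, hn⟩ := ih
    refine ⟨by rw [pow_succ', Module.End.mul_apply]; exact h1 _ h, ?_⟩
    rw [pow_succ', Module.End.mul_apply, hn]
    change Submodule.mkQ _ (N.restrict h1 ⟨(N ^ n) v, h⟩) = _
    congr 1
    ext
    simp [pow_succ']

end GradedPieces

section AdaptedMatrix

variable {K V ι : Type*} [Field K] [AddCommGroup V] [Module K V] [Fintype ι] [DecidableEq ι]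
  {b : Module.Basis ι K V} {y r : ι → ℤ} {W M : ℤ → Submodule K V} {Yr N : Module.End K V}

lemma toMatrixAlgEquiv_mulVec_repr (b : Module.Basis ι K V) (f : Module.End K V) (x : V) :
    (LinearMap.toMatrixAlgEquiv b f).mulVec (b.repr x) = b.repr (f x) :=
  LinearMap.toMatrix_mulVec_repr b b f x

lemma component_zero_pow {A : Matrix ι ι K} (hA : A ∈ lower K y 0) (n : ℕ) :
    component K y 0 (A ^ n) = component K y 0 A ^ n := by
  induction n with
  | zero => rw [pow_zero, pow_zero, component_of_mem_homog one_mem_homog, if_pos rfl]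
  | succ n ih =>
    have hn : A ^ n ∈ lower K y 0 := by simpa using pow_mem_lower hA n
    rw [pow_succ, pow_succ, ← ih]
    simpa using component_mul_of_mem_lower hn hA

namespace IsAdaptedBasis

lemma toMatrix_mem_lower_iff (hb : IsAdaptedBasis b y r W Yr) {f : Module.End K V} :
    LinearMap.toMatrixAlgEquiv b f ∈ lower K y 0 ↔ ∀ k, ∀ x ∈ W k, f x ∈ W k := by
  constructor
  · intro hf k x hx
    refine (hb.mem_iff _ _).mpr fun i hi => ?_
    rw [← toMatrixAlgEquiv_mulVec_repr] at hi
    obtain ⟨j, -, hj⟩ := Finset.exists_ne_zero_of_sum_ne_zero hi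
    have h1 := hf i j (left_ne_zero_of_mul hj)
    have h2 := (hb.mem_iff _ _).mp hx j (right_ne_zero_of_mul hj)
    omega
  · intro hf i j hij
    rw [LinearMap.toMatrixAlgEquiv_apply] at hij
    have := (hb.mem_iff _ _).mp (hf _ _ (hb.basis_mem j)) i hij
    omega

lemma toMatrix_eq_diagonal {a : ι → K} {f : Module.End K V} (hf : ∀ i, f (b i) = a i • b i) :
    LinearMap.toMatrixAlgEquiv b f = Matrix.diagonal a := by
  ext i j
  rw [LinearMap.toMatrixAlgEquiv_apply, hf, map_smul, Finsupp.smul_apply,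
    Module.Basis.repr_self, Matrix.diagonal_apply, Finsupp.single_apply]
  by_cases h : i = j
  · simp [h]
  · simp [h, Ne.symm h]

lemma toMatrix_mem_homog_iff [CharZero K] (hb : IsAdaptedBasis b y r W Yr) {f : Module.End K V}
    {c : ℤ} : LinearMap.toMatrixAlgEquiv b f ∈ homog K r c ↔ Yr * f - f * Yr = (c : K) • f := by
  rw [mem_homog_iff_commutator, ← toMatrix_eq_diagonal hb.apply, innerDer_apply, ← map_mul,
    ← map_mul, ← map_sub, ← map_smul, (LinearMap.toMatrixAlgEquiv b).injective.eq_iff]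

lemma isLefschetz [CharZero K] (hb : IsAdaptedBasis b y r W Yr)
    {hNW : ∀ k, ∀ x ∈ W k, N x ∈ W k} (hM : IsRelWeightFiltration W N hNW M)
    (hYr : IsGrading M Yr) (hN : LinearMap.toMatrixAlgEquiv b N ∈ homog K r (-2)) :
    IsLefschetz (r - y) (component K y 0 (LinearMap.toMatrixAlgEquiv b N)) := by
  have hMmem (k : ℤ) (x : V) : x ∈ M k ↔ ∀ i, b.repr x i ≠ 0 → r i ≤ k := by
    rw [hYr k]
    exact mem_iSup_eigenspace_iff b hb.apply k x
  set A := LinearMap.toMatrixAlgEquiv b N with hA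
  have hAlow : A ∈ lower K y 0 := hb.toMatrix_mem_lower_iff.mpr hNW
  have hentry (ℓ : ℕ) (i j : ι) (hij : y i = y j) :
      (component K y 0 A ^ ℓ) i j = (A ^ ℓ) i j := by
    rw [← component_zero_pow hAlow, component_apply, if_pos (by omega)]
  have hentry' (ℓ : ℕ) (i j : ι) (hij : y i ≠ y j) : (component K y 0 A ^ ℓ) i j = 0 := by
    rw [← component_zero_pow hAlow, component_apply, if_neg (by omega)]
  have hlow (ℓ : ℕ) (i j : ι) (hij : (A ^ ℓ) i j ≠ 0) : y i ≤ y j := by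
    have := pow_mem_lower hAlow ℓ i j hij
    simp at this
    omega
  have hpow (ℓ : ℕ) (x : V) (i : ι) :
      b.repr ((N ^ ℓ) x) i = ∑ j, (A ^ ℓ) i j * b.repr x j := by
    rw [← toMatrixAlgEquiv_mulVec_repr, map_pow]
    rfl
  constructor
  · intro ℓ x hx hAx
    by_contra hne
    obtain ⟨i₀, hi₀⟩ := Function.ne_iff.mp hne
    have hℓ := hx i₀ hi₀
    simp only [Pi.sub_apply] at hℓ hx
    set k := y i₀ with hk
    set v : V := b.equivFun.symm fun j => if y j = k then x j else 0 with hv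
    have hvr (j : ι) : b.repr v j = if y j = k then x j else 0 := by
      rw [← Module.Basis.equivFun_apply, hv, LinearEquiv.apply_symm_apply]
    have hvW : v ∈ W k := (hb.mem_iff _ _).mpr fun i hi => by
      rw [hvr] at hi
      by_contra h
      exact hi (if_neg (by omega))
    have hvM : v ∈ M (ℓ + k) := (hMmem _ _).mpr fun i hi => by
      rw [hvr] at hi
      split_ifs at hi with h
      · have := hx i hi
        omega
      · exact absurd rfl hi
    have hNv : (N ^ ℓ) v ∈ W (k - 1) := (hb.mem_iff _ _).mpr fun i hi => by
      by_contra hik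
      apply hi
      rw [hpow]
      rcases eq_or_ne (y i) k with h | h
      · have := congrFun hAx i
        rw [Pi.zero_apply] at this
        rw [← this]
        refine Finset.sum_congr rfl fun j _ => ?_
        change _ = (component K y 0 A ^ ℓ) i j * x j
        rw [hvr]
        split_ifs with hj
        · rw [hentry _ _ _ (by omega)]
        · rw [hentry' _ _ _ (by omega), zero_mul, mul_zero]
      · refine Finset.sum_eq_zero fun j _ => ?_
        rw [hvr]
        split_ifs with hj
        · by_cases h0 : (A ^ ℓ) i j = 0
          · rw [h0, zero_mul]
          · have := hlow _ _ _ h0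
            omega
        · rw [mul_zero]
    obtain ⟨h1, h2⟩ := grEnd_pow_mkQ (hNW k) (hNW (k - 1)) ℓ ⟨v, hvW⟩
    have hgr := ((hM.2.2.2.2 k).2.2.2.2 ℓ (by omega)).2 (Submodule.mkQ _ ⟨v, hvW⟩)
      ((mkQ_mem_inducedFil _).mpr ⟨v, hvW, hvM, by simp⟩) (by
        rw [Int.toNat_natCast, h2]
        refine (mkQ_mem_inducedFil _).mpr ⟨0, zero_mem _, zero_mem _, ?_⟩
        simpa using hNv)
    obtain ⟨z, -, hzM, hzv⟩ := (mkQ_mem_inducedFil _).mp hgr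
    have hz0 : b.repr z i₀ ≠ 0 := by
      intro h0
      have := (hb.mem_iff _ _).mp hzv i₀ (by
        simp only [map_sub, Finsupp.sub_apply, h0, hvr, zero_sub]
        simpa [hk] using hi₀)
      omega
    have := (hMmem _ _).mp hzM i₀ hz0
    omega
  · intro ℓ i hi
    simp only [Pi.sub_apply] at hi ⊢
    set k := y i with hk
    have hbW : b i ∈ W k := hb.basis_mem i
    have hbM : b i ∈ M (-ℓ + k) := (hMmem _ _).mpr fun j hj => by
      by_cases h : i = j
      · rw [← h]; omega
      · simp [h] at hj
    obtain ⟨v', hv', hv'2⟩ := ((hM.2.2.2.2 k).2.2.2.2 ℓ (by omega)).1 (Submodule.mkQ _ ⟨b i, hbW⟩)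
      ((mkQ_mem_inducedFil _).mpr ⟨b i, hbW, hbM, by simp⟩)
    obtain ⟨⟨v, hvW⟩, hvM, rfl⟩ := hv'
    replace hvM : v ∈ M (ℓ + k) := hvM
    obtain ⟨h1, h2⟩ := grEnd_pow_mkQ (hNW k) (hNW (k - 1)) ℓ ⟨v, hvW⟩
    rw [Int.toNat_natCast, h2, ← map_sub] at hv'2
    obtain ⟨z, -, hzM, hz⟩ := (mkQ_mem_inducedFil _).mp hv'2
    simp only [AddSubgroupClass.coe_sub] at hz
    refine ⟨fun j => if y j = k ∧ r j = k + ℓ then b.repr v j else 0, fun j hj => ?_, ?_⟩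
    · by_contra h
      exact hj (if_neg (by omega))
    · ext i'
      change ∑ j, (component K y 0 A ^ ℓ) i' j * (if y j = k ∧ r j = k + ℓ then b.repr v j else 0)
        = _
      by_cases hi' : y i' = k ∧ r i' = k - ℓ
      · have hz0 : b.repr z i' = 0 := by
          by_contra h
          have := (hMmem _ _).mp hzM i' h
          omega
        have hd : b.repr (z - ((N ^ ℓ) v - b i)) i' = 0 := by
          by_contra h
          have := (hb.mem_iff _ _).mp hz i' h
          omega
        simp only [map_sub, Finsupp.sub_apply, hz0, zero_sub, neg_sub, sub_eq_zero] at hd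
        rw [Module.Basis.repr_self, hpow] at hd
        rw [← Finsupp.single_eq_pi_single, hd]
        refine Finset.sum_congr rfl fun j _ => ?_
        split_ifs with hj
        · rw [hentry _ _ _ (by omega)]
        · rw [mul_zero, eq_comm]
          by_cases h0 : (A ^ ℓ) i' j = 0
          · rw [h0, zero_mul]
          by_cases h3 : b.repr v j = 0
          · rw [h3, mul_zero]
          have h4 := hlow _ _ _ h0
          have h5 := pow_mem_homog hN ℓ i' j h0
          have h6 := (hb.mem_iff _ _).mp hvW j h3
          omega
      · rw [Pi.single_eq_of_ne (by rintro rfl; omega)]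
        refine Finset.sum_eq_zero fun j _ => ?_
        split_ifs with hj
        · by_cases hij : y i' = y j
          · rw [hentry _ _ _ hij]
            by_cases h0 : (A ^ ℓ) i' j = 0
            · rw [h0, zero_mul]
            have h5 := pow_mem_homog hN ℓ i' j h0
            omega
          · rw [hentry' _ _ _ hij, zero_mul]
        · rw [mul_zero]

end IsAdaptedBasis

end AdaptedMatrix

lemma sum_component_eq {K ι : Type*} [Field K] {y : ι → ℤ} {A : Matrix ι ι K} (hA : A ∈ lower K y 0) {n : ℕ}
    (hn : lower K y (-n) = ⊥) : ∑ j ∈ Finset.range n, component K y (-(j : ℤ)) A = A := by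
  have key (m : ℕ) :
      A - ∑ j ∈ Finset.range m, component K y (-(j : ℤ)) A ∈ lower K y (-(m : ℤ)) := by
    induction m with
    | zero => simpa using hA
    | succ m ih =>
      rw [Nat.cast_succ, neg_add, ← sub_eq_add_neg]
      refine mem_lower_pred ?_ ?_
      · rw [Finset.sum_range_succ, ← sub_sub]
        exact sub_mem ih (homog_le_lower (component_mem_homog A))
      · rw [map_sub, map_sum, Finset.sum_congr rfl fun j _ =>
          component_of_mem_homog (component_mem_homog A)]
        simp
  have h := key n
  rw [hn, Submodule.mem_bot, sub_eq_zero] at h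
  exact h.symm

section GradingMatrix

variable {K V ι : Type*} [Field K] [CharZero K] [AddCommGroup V] [Module K V] [Fintype ι]
  [DecidableEq ι] {y r : ι → ℤ}

/-- Eigencomponents of `N` for a grading which an algebra homomorphism carries to the diagonal
matrix `y` compute the components of the image of `N`. -/
lemma isNormalized_of_eigencomponents (f : Module.End K V →ₐ[K] Matrix ι ι K)
    {Y N : Module.End K V} (hY : f Y = Matrix.diagonal fun i => (y i : K)) {n : ℕ}
    {C : ℕ → Module.End K V} (hC : ∀ j : ℕ, Y * C j - C j * Y = (-(j : K)) • C j)
    (hN : N = ∑ j ∈ Finset.range n, C j)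
    (hnorm : ∀ k : ℕ, 0 < k → ((adE (C 0)) ^ (k - 1)) (C k) = 0) : IsNormalized y (f N) := by
  have hmem (j : ℕ) : f (C j) ∈ homog K y (-(j : ℤ)) := by
    rw [mem_homog_iff_commutator, ← hY, innerDer_apply, ← map_mul, ← map_mul, ← map_sub, hC,
      map_smul]
    push_cast
    rfl
  have hcomp (k : ℕ) : component K y (-(k : ℤ)) (f N) = if k < n then f (C k) else 0 := by
    rw [hN, map_sum, map_sum, Finset.sum_congr rfl fun j _ => component_of_mem_homog (hmem j)]
    simp
  intro k hk
  have h0 := hcomp 0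
  rw [Nat.cast_zero, neg_zero] at h0
  rw [hcomp k, h0]
  by_cases hkn : k < n
  · rw [if_pos hkn, if_pos (hk.trans hkn), ← map_innerDer_pow]
    exact (congrArg f (hnorm k hk)).trans (map_zero f)
  · rw [if_neg hkn, map_zero]

namespace IsAdaptedBasis

variable {b : Module.Basis ι K V} {W : ℤ → Submodule K V} {Yr N : Module.End K V}

lemma exists_conj_diagonal (hb : IsAdaptedBasis b y r W Yr) {Y : Module.End K V}
    (hY : IsGrading W Y) (hYrY : Yr * Y = Y * Yr) :
    ∃ X ∈ lower K y (-1), X ∈ homog K r 0 ∧ LinearMap.toMatrixAlgEquiv b Y * (1 + X) =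
      (1 + X) * Matrix.diagonal fun i => (y i : K) := by
  have hex (j : ι) : ∃ e, Y e = (y j : K) • e ∧ e - b j ∈ W (y j - 1) := by
    have hle : W (y j) ≤ Module.End.eigenspace Y (y j : K) ⊔ W (y j - 1) := by
      rw [hY (y j)]
      refine iSup₂_le fun i hi => ?_
      rcases hi.eq_or_lt with rfl | hlt
      · exact le_sup_left
      · refine le_sup_of_le_right ?_
        rw [hY (y j - 1)]
        exact le_iSup₂_of_le (f := fun (i : ℤ) (_ : i ≤ y j - 1) =>
          Module.End.eigenspace Y (i : K)) i (by omega) le_rfl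
    obtain ⟨e, he, w, hw, hew⟩ := Submodule.mem_sup.mp (hle (hb.basis_mem j))
    refine ⟨e, Module.End.mem_eigenspace_iff.mp he, ?_⟩
    rw [← hew, sub_add_cancel_left]
    exact neg_mem hw
  choose e he hew using hex
  set X : Matrix ι ι K := Matrix.of fun i j => b.repr (e j - b j) i with hX
  have hXlow : X ∈ lower K y (-1) := fun i j hij => by
    have := (hb.mem_iff _ _).mp (hew j) i hij
    omega
  have hone (i j : ι) : (1 + X) i j = b.repr (e j) i := by
    simp [hX, Matrix.one_apply, Finsupp.single_apply, eq_comm]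
  have heq : LinearMap.toMatrixAlgEquiv b Y * (1 + X) =
      (1 + X) * Matrix.diagonal fun i => (y i : K) := by
    ext i j
    rw [Matrix.mul_diagonal, hone, Matrix.mul_apply, Finset.sum_congr rfl fun k _ => by
      rw [hone k j]]
    refine (congrFun (toMatrixAlgEquiv_mulVec_repr b Y (e j)) i).trans ?_
    rw [he, map_smul, Finsupp.smul_apply, smul_eq_mul, mul_comm]
  have hYr : LinearMap.toMatrixAlgEquiv b Y ∈ homog K r 0 := by
    rw [hb.toMatrix_mem_homog_iff, hYrY, sub_self, Int.cast_zero, zero_smul]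
  have hcomp : component K r 0 (1 + X) = 1 + component K r 0 X := by
    rw [map_add, component_of_mem_homog one_mem_homog, if_pos rfl]
  refine ⟨component K r 0 X, component_mem_lower_of_mem hXlow, component_mem_homog _, ?_⟩
  have h := congrArg (component K r 0) heq
  rwa [component_mul_of_mem_homog_left hYr, component_mul_of_mem_homog_right
    (diagonal_mem_homog _), sub_zero, hcomp] at h

lemma isGrading_conj (hb : IsAdaptedBasis b y r W Yr) {u t : Matrix ι ι K}
    (hu : u ∈ lower K y 0) (ht : t ∈ lower K y 0) (htu : t * u = 1) (hut : u * t = 1) :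
    IsGrading W ((LinearMap.toMatrixAlgEquiv b).symm
      (u * Matrix.diagonal (fun i => (y i : K)) * t)) := by
  set φ := LinearMap.toMatrixAlgEquiv b with hφ
  obtain ⟨U, rfl⟩ := φ.surjective u
  obtain ⟨T, rfl⟩ := φ.surjective t
  have hTU : T * U = 1 := φ.injective (by rw [map_mul, htu, map_one])
  have hUT : U * T = 1 := φ.injective (by rw [map_mul, hut, map_one])
  rw [hφ, hb.toMatrix_mem_lower_iff] at hu ht
  set Y₀ : Module.End K V := φ.symm (Matrix.diagonal fun i => (y i : K)) with hY₀
  have hφY₀ : φ Y₀ = Matrix.diagonal fun i => (y i : K) := φ.apply_symm_apply _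
  have hY₀b (i : ι) : Y₀ (b i) = (y i : K) • b i := by
    apply b.repr.injective
    ext j
    rw [← LinearMap.toMatrixAlgEquiv_apply, ← hφ, hφY₀, map_smul, Finsupp.smul_apply,
      Module.Basis.repr_self, Matrix.diagonal_apply, Finsupp.single_apply]
    by_cases h : j = i
    · simp [h]
    · simp [h, Ne.symm h]
  rw [← hφY₀, ← map_mul, ← map_mul, AlgEquiv.symm_apply_apply]
  let e : V ≃ₗ[K] V := LinearEquiv.ofLinearMap U T hUT hTU
  have he (i : ι) : (U * Y₀ * T) ((b.map e) i) = (y i : K) • (b.map e) i := by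
    rw [Module.Basis.map_apply]
    change (U * Y₀) ((T * U) (b i)) = (y i : K) • U (b i)
    rw [hTU, Module.End.one_apply, Module.End.mul_apply, hY₀b, map_smul]
  intro k
  ext x
  rw [mem_iSup_eigenspace_iff (b.map e) he]
  change _ ↔ ∀ i, b.repr (T x) i ≠ 0 → y i ≤ k
  rw [← hb.mem_iff]
  refine ⟨ht k x, fun hx => ?_⟩
  have h := hu k _ hx
  rwa [← Module.End.mul_apply, hUT] at h

end IsAdaptedBasis

end GradingMatrix

section Deligne

variable {K V ι : Type*} [Field K] [CharZero K] [AddCommGroup V] [Module K V] [Fintype ι]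
  [DecidableEq ι] {y r : ι → ℤ} {b : Module.Basis ι K V} {W : ℤ → Submodule K V}
  {Yr N : Module.End K V}

/-- `Y` is a grading of `W`, commuting with `Yr`, for which the eigencomponents `N₋ₖ` of `N` under
`ad Y` satisfy `N₋₁ = 0` and `(ad N₀) ^ (k - 1) N₋ₖ = 0`. -/
def IsDeligneGrading (W : ℤ → Submodule K V) (N Yr Y : Module.End K V) : Prop :=
  IsGrading W Y ∧ Yr * Y = Y * Yr ∧
    ∃ (n : ℕ) (C : ℕ → Module.End K V),
      (∀ j : ℕ, Y * C j - C j * Y = (-(j : K)) • C j) ∧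
      N = ∑ j ∈ Finset.range n, C j ∧
      C 1 = 0 ∧
      (∀ k : ℕ, 0 < k → ((adE (C 0)) ^ (k - 1)) (C k) = 0)

namespace IsAdaptedBasis

lemma exists_isDeligneGrading (hb : IsAdaptedBasis b y r W Yr)
    (hN : LinearMap.toMatrixAlgEquiv b N ∈ lower K y 0)
    (hNr : LinearMap.toMatrixAlgEquiv b N ∈ homog K r (-2))
    (hL : IsLefschetz (r - y) (component K y 0 (LinearMap.toMatrixAlgEquiv b N))) :
    ∃ Y, IsDeligneGrading W N Yr Y := by
  obtain ⟨X, hX, N', hN', hXr, hconj, hnorm⟩ := exists_isNormalized hN hNr hL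
  obtain ⟨Z, hZ, hZr, hZX, hXZ⟩ := exists_inverse_one_add hX hXr
  set φ := LinearMap.toMatrixAlgEquiv b with hφ
  let ψ : Matrix ι ι K →ₐ[K] Module.End K V :=
    (φ.symm : Matrix ι ι K →ₐ[K] Module.End K V).comp (conjHom K (1 + X) (1 + Z) hZX hXZ)
  have hψ (x : Matrix ι ι K) : ψ x = φ.symm ((1 + X) * x * (1 + Z)) := by
    rw [← conjHom_apply (K := K) _ _ hZX hXZ]
    rfl
  have hlow {X : Matrix ι ι K} (hX : X ∈ lower K y (-1)) : 1 + X ∈ lower K y 0 :=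
    add_mem (homog_le_lower one_mem_homog) (lower_mono (by omega) hX)
  obtain ⟨n, hn⟩ := exists_lower_eq_bot (K := K) y
  refine ⟨ψ (Matrix.diagonal fun i => (y i : K)), ?_, ?_, n,
    fun j => ψ (component K y (-(j : ℤ)) N'), fun j => ?_, ?_, ?_, fun k hk => ?_⟩
  · rw [hψ]
    exact hb.isGrading_conj (hlow hX) (hlow hZ) hZX hXZ
  · have h : φ (ψ (Matrix.diagonal fun i => (y i : K))) ∈ homog K r 0 := by
      rw [hψ, AlgEquiv.apply_symm_apply]
      simpa using mul_mem_homog (mul_mem_homog (add_mem one_mem_homog hXr)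
        (diagonal_mem_homog _)) (add_mem one_mem_homog hZr)
    rw [hb.toMatrix_mem_homog_iff, Int.cast_zero, zero_smul, sub_eq_zero] at h
    exact h
  · rw [← map_mul, ← map_mul, ← map_sub, ← innerDer_apply (K := K),
      mem_homog_iff_commutator.mp (component_mem_homog N'), map_smul]
    push_cast
    rfl
  · rw [← map_sum, sum_component_eq hN' hn, hψ, hconj, mul_assoc, hXZ, mul_one,
      AlgEquiv.symm_apply_apply]
  · have h := hnorm 1 one_pos
    rw [Nat.sub_self, pow_zero, Module.End.one_apply] at h
    exact (congrArg ψ h).trans (map_zero ψ)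
  · have h := congrArg ψ (hnorm k hk)
    rw [map_innerDer_pow, map_zero] at h
    simp only [Nat.cast_zero, neg_zero]
    exact h

lemma isDeligneGrading_conj (hb : IsAdaptedBasis b y r W Yr)
    {Y : Module.End K V} (hY : IsDeligneGrading W N Yr Y) :
    ∃ X ∈ lower K y (-1), ∃ Z ∈ lower K y (-1), X ∈ homog K r 0 ∧ Z ∈ homog K r 0 ∧
      (1 + Z) * (1 + X) = 1 ∧ (1 + X) * (1 + Z) = 1 ∧
      LinearMap.toMatrixAlgEquiv b Y =
        (1 + X) * Matrix.diagonal (fun i => (y i : K)) * (1 + Z) ∧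
      IsNormalized y ((1 + Z) * LinearMap.toMatrixAlgEquiv b N * (1 + X)) := by
  obtain ⟨hYW, hYrY, n, C, hC, hNC, -, hnorm⟩ := hY
  obtain ⟨X, hX, hXr, hXY⟩ := hb.exists_conj_diagonal hYW hYrY
  obtain ⟨Z, hZ, hZr, hZX, hXZ⟩ := exists_inverse_one_add hX hXr
  refine ⟨X, hX, Z, hZ, hXr, hZr, hZX, hXZ, ?_, ?_⟩
  · rw [← hXY, mul_assoc, hXZ, mul_one]
  · rw [← conjHom_apply (K := K) _ _ hXZ hZX]
    refine isNormalized_of_eigencomponents ((conjHom K (1 + Z) (1 + X) hXZ hZX).comp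
      (LinearMap.toMatrixAlgEquiv b : Module.End K V →ₐ[K] Matrix ι ι K)) ?_ hC hNC hnorm
    change conjHom K (1 + Z) (1 + X) hXZ hZX (LinearMap.toMatrixAlgEquiv b Y) = _
    rw [conjHom_apply, mul_assoc, hXY, ← mul_assoc, hZX, one_mul]

lemma eq_of_isDeligneGrading (hb : IsAdaptedBasis b y r W Yr)
    (hN : LinearMap.toMatrixAlgEquiv b N ∈ lower K y 0)
    (hNr : LinearMap.toMatrixAlgEquiv b N ∈ homog K r (-2))
    (hL : IsLefschetz (r - y) (component K y 0 (LinearMap.toMatrixAlgEquiv b N)))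
    {Y Y' : Module.End K V} (hY : IsDeligneGrading W N Yr Y) (hY' : IsDeligneGrading W N Yr Y') :
    Y = Y' := by
  obtain ⟨X, hX, Z, hZ, hXr, hZr, hZX, hXZ, hYX, hnorm⟩ := hb.isDeligneGrading_conj hY
  obtain ⟨X', hX', Z', hZ', hXr', hZr', hZX', hXZ', hYX', hnorm'⟩ := hb.isDeligneGrading_conj hY'
  set A := LinearMap.toMatrixAlgEquiv b N with hA
  have hlow {X : Matrix ι ι K} (hX : X ∈ lower K y (-1)) : 1 + X ∈ lower K y 0 :=
    add_mem (homog_le_lower one_mem_homog) (lower_mono (by omega) hX)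
  have hlow' {X Z : Matrix ι ι K} (hX : X ∈ lower K y (-1)) (hZ : Z ∈ lower K y (-1)) :
      (1 + Z) * A * (1 + X) ∈ lower K y 0 := by
    simpa using mul_mem_lower (mul_mem_lower (hlow hZ) hN) (hlow hX)
  have hcomp : component K y 0 ((1 + Z) * A * (1 + X)) = component K y 0 A := by
    have h := (component_conj one_pos hX hN (hlow' hX hZ) (by
      calc _ = (1 + X) * ((1 + Z) * A * (1 + X)) := by rw [add_mul 1 X, one_mul]
        _ = ((1 + X) * (1 + Z)) * A * (1 + X) := by simp only [mul_assoc]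
        _ = _ := by rw [hXZ, one_mul, mul_add, mul_one])).1 0 one_pos
    rwa [neg_zero] at h
  have hone : 1 + (Z + X' + Z * X') = (1 + Z) * (1 + X') := by noncomm_ring
  have hzero : Z + X' + Z * X' = 0 := by
    refine eq_zero_of_isNormalized (r := r) (N := (1 + Z) * A * (1 + X))
      (N' := (1 + Z') * A * (1 + X')) ?_ ?_ (hlow' hX hZ) ?_ (hlow' hX' hZ') (hcomp ▸ hL) ?_ hnorm
      hnorm'
    · exact add_mem (add_mem hZ hX') (lower_mono (by omega) (mul_mem_lower hZ hX'))
    · exact add_mem (add_mem hZr hXr') (by simpa using mul_mem_homog hZr hXr')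
    · simpa using mul_mem_homog (mul_mem_homog (add_mem one_mem_homog hZr) hNr)
        (add_mem one_mem_homog hXr)
    · rw [hone]
      calc _ = (1 + Z) * ((1 + X') * (1 + Z')) * A * (1 + X') := by simp only [mul_assoc]
        _ = (1 + Z) * A * ((1 + X) * (1 + Z)) * (1 + X') := by rw [hXZ, hXZ', mul_one, mul_one]
        _ = _ := by simp only [mul_assoc]
  rw [hzero, add_zero] at hone
  have hXX' : 1 + X = 1 + X' := left_inv_eq_right_inv hXZ hone.symm
  have hZZ' : 1 + Z = 1 + Z' := left_inv_eq_right_inv hone.symm hXZ'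
  apply (LinearMap.toMatrixAlgEquiv b).injective
  rw [hYX, hYX', hXX', hZZ']

end IsAdaptedBasis

end Deligne

/-- Deligne's first theorem: given a nilpotent `N` preserving `W` whose relative weight
filtration `M = W^r(N,W)` exists, and a grading `Y^r` of `M` preserving `W` with
`[Y^r, N] = -2N`, there is a unique grading `Y` of `W` such that (1) `[Y^r, Y] = 0`;
(2) in the decomposition `N = N₀ + N₋₁ + N₋₂ + ⋯` by eigencomponents of `ad Y`
(`N₋ⱼ` in the `(-j)`-eigenspace) one has `N₋₁ = 0`; and (3) `(ad N₀)^{k-1}(N₋ₖ) = 0`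
for all `k > 0`. -/
theorem deligne_grading_exists_unique {K V : Type*} [Field K] [IsAlgClosed K] [CharZero K]
    [AddCommGroup V] [Module K V] [FiniteDimensional K V]
    (W : ℤ → Submodule K V) (hWmono : Monotone W)
    (hWbot : ∃ a : ℤ, ∀ k ≤ a, W k = ⊥) (hWtop : ∃ b : ℤ, ∀ k, b ≤ k → W k = ⊤)
    (N : Module.End K V) (hNnil : IsNilpotent N)
    (hNW : ∀ k, ∀ x ∈ W k, N x ∈ W k)
    (M : ℤ → Submodule K V) (hM : IsRelWeightFiltration W N hNW M)
    (Yr : Module.End K V) (hYr : IsGrading M Yr)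
    (hYrW : ∀ k, ∀ x ∈ W k, Yr x ∈ W k)
    (hYrN : Yr * N - N * Yr = (-2 : K) • N) :
    ∃! Y : Module.End K V,
      IsGrading W Y ∧ Yr * Y = Y * Yr ∧
      ∃ (n : ℕ) (C : ℕ → Module.End K V),
        (∀ j : ℕ, Y * C j - C j * Y = (-(j : K)) • C j) ∧
        N = ∑ j ∈ Finset.range n, C j ∧
        C 1 = 0 ∧
        (∀ k : ℕ, 0 < k → ((adE (C 0)) ^ (k - 1)) (C k) = 0) := by
  have htop : ⨆ p : ℤ, Module.End.eigenspace Yr (p : K) = ⊤ := by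
    obtain ⟨m, hm⟩ := hM.2.2.1
    rw [eq_top_iff, ← hm m le_rfl, hYr m]
    exact iSup₂_le fun j _ => le_iSup (fun p : ℤ => Module.End.eigenspace Yr (p : K)) j
  obtain ⟨s, b, y, r, hb⟩ := exists_isAdaptedBasis hWmono hWbot hWtop Yr htop hYrW
  classical
  have : Fintype s := FiniteDimensional.fintypeBasisIndex b
  have hN := hb.toMatrix_mem_lower_iff.mpr hNW
  have hNr : LinearMap.toMatrixAlgEquiv b N ∈ homog K r (-2) := by
    rw [hb.toMatrix_mem_homog_iff, hYrN]
    push_cast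
    rfl
  have hL := hb.isLefschetz hM hYr hNr
  obtain ⟨Y, hY⟩ := hb.exists_isDeligneGrading hN hNr hL
  exact ⟨Y, hY, fun Y' hY' => hb.eq_of_isDeligneGrading hN hNr hL hY' hY⟩
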